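/- Assume n is even, n ≥ 2, and a^2 ≠ c^2. If X ∈ F_{q^2} is a periodic point of f whose minimal period is even, say equal to 2k, then k = k_j for some integer j with 0 ≤ j < r/𝔤(n−1). -/

import Mathlib

/-!
Write `X = x + y β` with `x, y ∈ F_q`. As `β ^ q = -β`, the map `f` becomes
`(x, y) ↦ (δ1 y ^ n, δ2 x y ^ (n-1))` (`apply_coord`), whose square is multiplication by a scalar:
`f (f X) = E • X` with `E = δ1 δ2 (δ2 x y ^ n) ^ (n-1) ∈ F_q`. Since `f` is homogeneous of degree `n`
under scalars of `F_q`, iterating gives `f^[2m] X = E ^ (1 + n² + ⋯ + n ^ (2(m-1))) • X`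
(`iterate_two_mul`). Hence a point of minimal period `2k` has `k` equal to the least `m ≥ 1` with
`orderOf E ∣ 1 + n² + ⋯ + n ^ (2(m-1))`, which is the multiplicative order of `n²` modulo
`(n² - 1) · orderOf E` (`dvd_geom_sum_iff`).

It remains to see that `orderOf E` is one of the `d_j`. Periodicity makes `orderOf E` coprime to `n`,
so it divides `r` and `E = α ^ (s t)` for some `t`. As `E` agrees with `δ1 δ2 = α ^ l0` up to an
`(n-1)`-th power, `s t ≡ l0` modulo `g = gcd (n-1, q-1)`. Now `s` is coprime to `g`, so `t ≡ t0`
modulo `g`; since `g ∣ r`, reducing `t` modulo `r` puts it in the form `t0 + j g` with `j < r / g`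
(`exists_index`).
-/

/-- The map `X ↦ (c X^q + a X)(X^q - X)^(n-1)` at `X = x + y β`, where `x - y β` is the conjugate
`X^q`. -/
theorem apply_coord {F : Type*} [Field F] (a c β x y : F) (n : ℕ) (hn : 2 ≤ n) :
    (c * (x - y * β) + a * (x + y * β)) * ((x - y * β) - (x + y * β)) ^ (n - 1) =
      ((a - c) * (-2 : F) ^ (n - 1) * β ^ n) * y ^ n +
        ((a + c) * (-2 : F) ^ (n - 1) * β ^ (n - 2)) * x * y ^ (n - 1) * β := by
  obtain ⟨m, rfl⟩ := Nat.exists_eq_add_of_le hn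
  have e1 : 2 + m - 1 = m + 1 := by omega
  have e2 : 2 + m - 2 = m := by omega
  have e3 : (x - y * β) - (x + y * β) = (-2) * (y * β) := by ring
  rw [e1, e2, e3, mul_pow, mul_pow]
  ring

theorem iterate_two_mul {F : Type*} [Field F] (f : F → F) (q n : ℕ) (X E : F)
    (hom : ∀ l Y : F, l ^ q = l → f (l * Y) = l ^ n * f Y) (hE : E ^ q = E)
    (hff : f (f X) = E * X) (m : ℕ) :
    f^[2 * m] X = E ^ (∑ i ∈ Finset.range m, (n ^ 2) ^ i) * X := by
  induction m with
  | zero => simp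
  | succ m ih =>
    have fixed : ∀ i : ℕ, (E ^ i) ^ q = E ^ i := fun i => by rw [← pow_mul, mul_comm, pow_mul, hE]
    rw [show 2 * (m + 1) = (2 * m) + 1 + 1 by ring, Function.iterate_succ_apply',
      Function.iterate_succ_apply', ih, hom _ _ (fixed _), hom _ _ (by rw [← pow_mul E, fixed]), hff,
      geom_sum_succ, pow_succ E]
    ring

/-- Multiplying by `n² - 1` turns divisibility of the geometric sum by `d` into
`n ^ (2 m) ≡ 1` modulo `(n² - 1) d`. -/
theorem dvd_geom_sum_iff (n d m : ℕ) (hn : 2 ≤ n) :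
    d ∣ ∑ i ∈ Finset.range m, (n ^ 2) ^ i ↔ ((n : ZMod ((n ^ 2 - 1) * d)) ^ 2) ^ m = 1 := by
  have h4 : 4 ≤ n ^ 2 := by nlinarith
  have h1 : 1 ≤ (n ^ 2) ^ m := Nat.one_le_pow _ _ (by omega)
  have hpos : 0 < n ^ 2 - 1 := by omega
  have hg : (n ^ 2 - 1) * (∑ i ∈ Finset.range m, (n ^ 2) ^ i) = (n ^ 2) ^ m - 1 := by
    rw [mul_comm]
    exact geom_sum_mul_of_one_le (by omega) m
  rw [← Nat.mul_dvd_mul_iff_left hpos, hg, ← ZMod.natCast_eq_zero_iff, Nat.cast_sub h1]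
  push_cast
  rw [sub_eq_zero]

/-- A divisor `d` of `Q` coprime to `n` divides the largest such divisor `r`. -/
theorem dvd_of_max (Q n r d : ℕ) (hQ : 0 < Q) (hr : r ∣ Q) (hrn : Nat.Coprime r n)
    (hmax : ∀ r' : ℕ, r' ∣ Q → Nat.Coprime r' n → r' ≤ r) (hd : d ∣ Q) (hdn : Nat.Coprime d n) :
    d ∣ r := by
  have h1 : Nat.lcm d r ∣ Q := Nat.lcm_dvd hd hr
  have h2 : Nat.Coprime (Nat.lcm d r) n :=
    Nat.Coprime.coprime_dvd_left (Nat.lcm_dvd_mul d r) (hdn.mul_left hrn)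
  have h3 := hmax _ h1 h2
  have h4 : r ∣ Nat.lcm d r := Nat.dvd_lcm_right d r
  have h5 : Nat.lcm d r = r :=
    le_antisymm h3 (Nat.le_of_dvd (Nat.pos_of_dvd_of_pos h1 hQ) h4)
  exact h5 ▸ Nat.dvd_lcm_left d r

/-- The cofactor `s` of the largest divisor `r` coprime to `n` is coprime to every `g` coprime
to `n`. -/
theorem coprime_of_max (Q n r s g : ℕ) (hQ : 0 < Q) (hrn : Nat.Coprime r n)
    (hmax : ∀ r' : ℕ, r' ∣ Q → Nat.Coprime r' n → r' ≤ r) (hsr : Q = s * r)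
    (hg : Nat.Coprime g n) : Nat.Coprime g s := by
  have hr0 : 0 < r := by
    rcases Nat.eq_zero_or_pos r with h | h
    · simp [h] at hsr; omega
    · exact h
  have hh : Nat.Coprime (Nat.gcd g s) n := Nat.Coprime.coprime_dvd_left (Nat.gcd_dvd_left g s) hg
  have h1 := hmax (Nat.gcd g s * r) (hsr ▸ Nat.mul_dvd_mul_right (Nat.gcd_dvd_right g s) r)
    (hh.mul_left hrn)
  have h2 : 0 < Nat.gcd g s := by
    apply Nat.gcd_pos_of_pos_right
    rcases Nat.eq_zero_or_pos s with h | h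
    · simp [h] at hsr; omega
    · exact h
  have h3 : Nat.gcd g s ≤ 1 := by nlinarith
  exact le_antisymm h3 h2

/-- If `t ≡ t0` modulo a divisor `g` of `r`, then `t` is congruent modulo `r` to some `t0 + j g`
with `j < r / g`; only the resulting equality of gcds with `r` is recorded. -/
theorem exists_index (r g t t0 : ℕ) (hr : 0 < r) (hg : g ∣ r) (h : t ≡ t0 [MOD g]) (ht0 : t0 ≤ r) :
    ∃ j < r / g, Nat.gcd r (t0 + j * g) = Nat.gcd r t := by
  have hg0 : 0 < g := Nat.pos_of_dvd_of_pos hg hr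
  have hrg : 0 < r / g := Nat.div_pos (Nat.le_of_dvd hr hg) hg0
  -- shifting `t` by `r` makes the difference with `t0` a natural number
  have h1 : g ∣ (t + r) - t0 := by
    apply (Nat.modEq_iff_dvd' (by omega)).1
    have : t + r ≡ t + 0 [MOD g] := Nat.ModEq.add_left _ ((Nat.modEq_zero_iff_dvd).2 hg)
    exact (this.trans h).symm
  obtain ⟨J, hJ⟩ := h1
  refine ⟨J % (r / g), Nat.mod_lt _ hrg, ?_⟩
  have h2 : t + r = t0 + J * g := by rw [mul_comm J g, ← hJ]; omega
  have h3 : J * g = J % (r / g) * g + r * (J / (r / g)) := by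
    conv_lhs => rw [← Nat.mod_add_div J (r / g)]
    rw [add_mul, mul_right_comm, Nat.div_mul_cancel hg]
  rw [← Nat.gcd_add_mul_left_right r (t0 + J % (r / g) * g) (J / (r / g)), add_assoc, ← h3, ← h2]
  simp


/-- `n` even, `n ≥ 2`, `a² ≠ c²`. If `X` is periodic with even minimal
period `2k`, then `k = k_j` for some `0 ≤ j < r/𝔤(n-1)`. -/
theorem stmt_8 (p e q : ℕ) (hp : p.Prime) (hpodd : p ≠ 2) (he : 0 < e) (hq : q = p ^ e)
    (F : Type*) [Field F] [Fintype F] (hF : Fintype.card F = q ^ 2)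
    (a c : F) (ha : a ^ q = a) (hc : c ^ q = c)
    (n : ℕ) (hn2 : 2 ≤ n) (hneven : Even n)
    (hac : a ^ 2 ≠ c ^ 2)
    (f : F → F) (hf : ∀ X, f X = (c * X ^ q + a * X) * (X ^ q - X) ^ (n - 1))
    (β : F) (hβ : β ^ q ≠ β) (hβsq : (β ^ 2) ^ q = β ^ 2)
    (δ1 δ2 : F)
    (hδ1 : δ1 = (a - c) * (-2 : F) ^ (n - 1) * β ^ n)
    (hδ2 : δ2 = (a + c) * (-2 : F) ^ (n - 1) * β ^ (n - 2))
    (α : F) (hαq : α ^ q = α) (hα0 : α ≠ 0) (hαord : orderOf α = q - 1)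
    (r s : ℕ) (hrdvd : r ∣ q - 1) (hrcop : Nat.Coprime r n)
    (hrmax : ∀ r' : ℕ, r' ∣ q - 1 → Nat.Coprime r' n → r' ≤ r)
    (hsr : q - 1 = s * r)
    (l0 : ℕ) (hl0 : δ1 * δ2 = α ^ l0) (hl0min : ∀ m : ℕ, δ1 * δ2 = α ^ m → l0 ≤ m)
    (t0 : ℕ) (ht01 : 1 ≤ t0) (ht0r : t0 ≤ r)
    (ht0c : s * t0 ≡ l0 [MOD Nat.gcd (n - 1) (q - 1)])
    (ht0min : ∀ t : ℕ, 1 ≤ t → t ≤ r → s * t ≡ l0 [MOD Nat.gcd (n - 1) (q - 1)] → t0 ≤ t)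
    (d k : ℕ → ℕ)
    (hd : ∀ j, d j = (q - 1) / (s * Nat.gcd ((q - 1) / s) (t0 + j * Nat.gcd (n - 1) (q - 1))))
    (hk : ∀ j, k j = orderOf ((n : ZMod ((n ^ 2 - 1) * d j)) ^ 2)) :
    ∀ (X : F) (k' : ℕ), 1 ≤ k' → Function.minimalPeriod f X = 2 * k' →
      ∃ j : ℕ, j < r / Nat.gcd (n - 1) (q - 1) ∧ k' = k j := by
  intro X k' hk' hmin
  have hn0 : n - 1 ≠ 0 := by omega
  have : Fact p.Prime := ⟨hp⟩
  have : CharP F p := charP_of_card_eq_prime_pow (p := p) (f := e * 2) (by rw [hF, hq, pow_mul])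
  have two_ne : (2 : F) ≠ 0 := by
    have := Ring.two_ne_zero (R := F) (by rwa [ringChar.eq F p])
    exact this
  have q3 : 3 ≤ q := by
    have h2 := hp.two_le
    have h3 : p ≤ p ^ e := Nat.le_self_pow he.ne' p
    omega
  have hQ : 0 < q - 1 := by omega
  -- the `q`-power Frobenius as a ring homomorphism
  obtain ⟨φ, hφ⟩ : ∃ φ : F →+* F, ∀ z, φ z = z ^ q :=
    ⟨iterateFrobenius F p e, fun z => by rw [iterateFrobenius_def, hq]⟩
  have hφφ : ∀ z, φ (φ z) = z := fun z => by
    rw [hφ, hφ, ← pow_mul, ← sq, ← hF, FiniteField.pow_card]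
  have hφ2 : φ 2 = 2 := map_ofNat φ 2
  have hφa : φ a = a := by rw [hφ, ha]
  have hφc : φ c = c := by rw [hφ, hc]
  have hφβ2 : φ β ^ 2 = β ^ 2 := by rw [← map_pow, hφ, hβsq]
  have hφβ : φ β = -β := by
    rcases sq_eq_sq_iff_eq_or_eq_neg.1 hφβ2 with h | h
    · exact absurd (by rw [← hφ, h]) hβ
    · exact h
  have β0 : β ≠ 0 := by
    rintro rfl
    exact hβ (zero_pow (by omega))
  have hφδ1 : φ δ1 = δ1 := by
    rw [hδ1]; simp [hφ2, hφa, hφc, hφβ, hneven.neg_pow]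
  have hφδ2 : φ δ2 = δ2 := by
    have : Even (n - 2) := (Nat.even_sub hn2).2 (by simp [hneven])
    rw [hδ2]; simp [hφ2, hφa, hφc, hφβ, this.neg_pow]
  have hcoord : ∀ x y : F, φ x = x → φ y = y →
      f (x + y * β) = δ1 * y ^ n + δ2 * x * y ^ (n - 1) * β := by
    intro x y hx hy
    have : (x + y * β) ^ q = x - y * β := by
      rw [← hφ, map_add, map_mul, hx, hy, hφβ]; ring
    rw [hf, this, apply_coord a c β x y n hn2, hδ1, hδ2]
  have hom : ∀ l Y : F, l ^ q = l → f (l * Y) = l ^ n * f Y := by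
    intro l Y hl
    rw [hf, hf, mul_pow, hl, ← mul_sub, mul_pow]
    obtain ⟨m, rfl⟩ := Nat.exists_eq_add_of_le hn2
    rw [show 2 + m - 1 = m + 1 by omega]
    ring
  obtain ⟨x, y, hx, hy, rfl⟩ : ∃ x y : F, φ x = x ∧ φ y = y ∧ X = x + y * β := by
    refine ⟨(X + φ X) / 2, (X - φ X) / (2 * β), ?_, ?_, ?_⟩
    · simp [hφφ, hφ2, add_comm]
    · simp only [map_div₀, map_sub, map_mul, hφφ, hφβ, map_ofNat]
      field_simp
      ring
    · field_simp
      ring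
  set X := x + y * β with hX
  -- `w` is the quantity whose `(n-1)`-th power separates `E` from `δ1 * δ2`
  set w := δ2 * x * y ^ n with hw
  set E := δ1 * δ2 * w ^ (n - 1) with hE
  have hφw : φ w = w := by simp [hw, hφδ2, hx, hy]
  have hφE : φ E = E := by simp [hE, hφδ1, hφδ2, hφw]
  have hEq : E ^ q = E := by rw [← hφ, hφE]
  have hff : f (f X) = E * X := by
    rw [hX, hcoord x y hx hy, hcoord _ _ (by simp [hφδ1, hy]) (by simp [hφδ2, hx, hy]), hE, hw]
    obtain ⟨m, rfl⟩ := Nat.exists_eq_add_of_le hn2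
    rw [show 2 + m - 1 = m + 1 by omega]
    ring
  have hiter := iterate_two_mul f q n X E hom hEq hff
  have hX0 : X ≠ 0 := by
    intro h0
    have hfix : Function.IsFixedPt f X := by
      rw [h0, Function.IsFixedPt, hf]
      simp [show q ≠ 0 by omega]
    have := Function.minimalPeriod_eq_one_iff_isFixedPt.2 hfix
    omega
  have hper : ∀ m : ℕ, k' ∣ m ↔ E ^ (∑ i ∈ Finset.range m, (n ^ 2) ^ i) = 1 := by
    intro m
    rw [← Nat.mul_dvd_mul_iff_left (show 0 < 2 by norm_num), ← hmin,
      ← Function.isPeriodicPt_iff_minimalPeriod_dvd, Function.IsPeriodicPt, Function.IsFixedPt,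
      hiter, mul_eq_right₀ hX0]
  obtain ⟨k1, rfl⟩ : ∃ k1, k' = k1 + 1 := ⟨k' - 1, by omega⟩
  have hS : E ^ (n ^ 2 * (∑ i ∈ Finset.range k1, (n ^ 2) ^ i) + 1) = 1 := by
    rw [← geom_sum_succ]
    exact (hper _).1 dvd_rfl
  have hE0 : E ≠ 0 := by
    intro h
    rw [h, zero_pow (by omega)] at hS
    exact zero_ne_one hS
  have hw0 : w ≠ 0 := by
    intro h
    exact hE0 (by rw [hE, h, zero_pow hn0, mul_zero])
  have hcop : Nat.Coprime (orderOf E) n := by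
    refine Nat.Coprime.coprime_dvd_left (orderOf_dvd_of_pow_eq_one hS) ?_
    rw [sq, mul_assoc, Nat.coprime_mul_left_add_left]
    exact Nat.coprime_one_left n
  have hunit : ∀ z : F, φ z = z → z ≠ 0 → z ^ (q - 1) = 1 := by
    intro z hz hz0
    have h : z ^ (q - 1) * z = 1 * z := by
      rw [← pow_succ, Nat.sub_add_cancel (by omega), ← hφ, hz, one_mul]
    exact mul_right_cancel₀ hz0 h
  have hkord : k1 + 1 = orderOf ((n : ZMod ((n ^ 2 - 1) * orderOf E)) ^ 2) := by
    apply Nat.dvd_right_iff_eq.1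
    intro m
    rw [hper, ← orderOf_dvd_iff_pow_eq_one, orderOf_dvd_iff_pow_eq_one (n := m),
      dvd_geom_sum_iff n _ m hn2]
  have hs0 : 0 < s := Nat.pos_of_ne_zero (by rintro rfl; simp at hsr; omega)
  have hr0 : 0 < r := Nat.pos_of_dvd_of_pos hrdvd hQ
  have hα : IsPrimitiveRoot α (q - 1) := hαord ▸ IsPrimitiveRoot.orderOf α
  have hαs : IsPrimitiveRoot (α ^ s) r := hα.pow hQ hsr
  have hEr : E ^ r = 1 := by
    refine orderOf_dvd_iff_pow_eq_one.1
      (dvd_of_max (q - 1) n r _ hQ hrdvd hrcop hrmax ?_ hcop)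
    exact orderOf_dvd_of_pow_eq_one (hunit E hφE hE0)
  have : NeZero r := ⟨hr0.ne'⟩
  have : NeZero (q - 1) := ⟨hQ.ne'⟩
  obtain ⟨t, -, ht⟩ := hαs.eq_pow_of_pow_eq_one hEr
  obtain ⟨u, -, hu⟩ := hα.eq_pow_of_pow_eq_one (hunit w hφw hw0)
  set g := Nat.gcd (n - 1) (q - 1) with hg
  have hgn : Nat.Coprime g n := by
    refine Nat.Coprime.coprime_dvd_left (Nat.gcd_dvd_left _ _) ?_
    have := Nat.coprime_self_add_right.2 (Nat.coprime_one_right (n - 1))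
    rwa [Nat.sub_add_cancel (by omega)] at this
  have hgr : g ∣ r := dvd_of_max (q - 1) n r g hQ hrdvd hrcop hrmax (Nat.gcd_dvd_right _ _) hgn
  have hgs : Nat.Coprime g s := coprime_of_max (q - 1) n r s g hQ hrcop hrmax hsr hgn
  have hst : s * t ≡ l0 [MOD g] := by
    have h1 : α ^ (s * t) = α ^ (l0 + u * (n - 1)) := by
      rw [pow_mul, ht, pow_add, pow_mul, hu, ← hl0]
    have h2 : s * t ≡ l0 + u * (n - 1) [MOD q - 1] := by
      rwa [(hα.isOfFinOrder hQ.ne').pow_eq_pow_iff_modEq, hαord] at h1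
    have h3 : u * (n - 1) ≡ 0 [MOD g] :=
      (Nat.modEq_zero_iff_dvd).2 ((Nat.gcd_dvd_left _ _).mul_left u)
    exact (h2.of_dvd (Nat.gcd_dvd_right _ _)).trans (Nat.ModEq.add_left l0 h3)
  have htt : t ≡ t0 [MOD g] := Nat.ModEq.cancel_left_of_coprime hgs (hst.trans ht0c.symm)
  obtain ⟨j, hj, hjt⟩ := exists_index r g t t0 hr0 hgr htt ht0r
  refine ⟨j, hj, ?_⟩
  have hdj : d j = orderOf E := by
    have hrs : (q - 1) / s = r := by rw [hsr, Nat.mul_div_cancel_left r hs0]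
    have hord : orderOf E = r / Nat.gcd r t := by
      rw [← ht, (hαs.isOfFinOrder hr0.ne').orderOf_pow, ← hαs.eq_orderOf]
    rw [hd, hrs, hjt, hord, hsr, Nat.mul_div_mul_left _ _ hs0]
  rw [hk, hdj]
  exact hkord
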